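/- Let ρ > 0, μ ∈ ℝ, and let u ∈ C²(C_Ω^ρ) satisfy u > 0 on C_Ω^ρ and −Δu(x) − μ|x|^{−2}u(x) ≥ 0 for all x ∈ C_Ω^ρ. Then for every smooth function ψ : ℝ^N → ℝ with compact support contained in the open cone C_Ω^ρ, one has ∫_{ℝ^N} |∇ψ(x)|² dx ≥ μ ∫_{ℝ^N} ψ(x)²/|x|² dx. -/

import Mathlib

open MeasureTheory Real Set
open scoped ENNReal NNReal

noncomputable section

/-- Euclidean space `ℝ^N`. -/
abbrev Euc (N : ℕ) := EuclideanSpace ℝ (Fin N)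

/-- The Euclidean Laplacian `Δu(x) = ∑ ∂²u/∂xᵢ²(x)`, the trace of the Hessian. -/
def lap (N : ℕ) (u : Euc N → ℝ) (x : Euc N) : ℝ :=
  ∑ i : Fin N,
    iteratedFDeriv ℝ 2 u x ![EuclideanSpace.single i 1, EuclideanSpace.single i 1]

/-- The open cone `C_Ω^ρ = {x : |x| > ρ, x/|x| ∈ Ω}`. -/
def coneGT (N : ℕ) (ρ : ℝ) (Ω : Set (Euc N)) : Set (Euc N) :=
  {x | ρ < ‖x‖ ∧ ‖x‖⁻¹ • x ∈ Ω}

/-- The full open cone `C_Ω = {x ≠ 0 : x/|x| ∈ Ω}`. -/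
def cone (N : ℕ) (Ω : Set (Euc N)) : Set (Euc N) :=
  {x | x ≠ 0 ∧ ‖x‖⁻¹ • x ∈ Ω}

/-- `Ω` is a nonempty, connected, relatively open subset of the unit sphere `S^{N-1}`. -/
def IsConeDomain (N : ℕ) (Ω : Set (Euc N)) : Prop :=
  Ω ⊆ Metric.sphere (0 : Euc N) 1 ∧ IsConnected Ω ∧
    IsOpen {ω : Metric.sphere (0 : Euc N) 1 | (ω : Euc N) ∈ Ω}

/-- The convolution `(|x|^{-α} * f)(x) = ∫_{C_Ω^ρ} f(y)|x-y|^{-α} dy`, valued in `[0,∞]`. -/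
def rieszConv (N : ℕ) (α ρ : ℝ) (Ω : Set (Euc N)) (f : Euc N → ℝ) (x : Euc N) : ℝ≥0∞ :=
  ∫⁻ y in coneGT N ρ Ω, ENNReal.ofReal (f y * ‖x - y‖ ^ (-α))

/-- Dirichlet eigenpair hypothesis for `(Ω, λ₁, φ)`: `φ` is continuous on the closure of `Ω`,
positive on `Ω`, vanishing on the relative boundary, with maximum `1`, and its 0-homogeneous
extension `Φ(x) = φ(x/|x|)` is `C²` on the open cone and satisfies `ΔΦ = -λ₁|x|⁻²Φ`. -/
structure DirichletEigenpair (N : ℕ) (Ω : Set (Euc N)) (lam1 : ℝ) (φ : Euc N → ℝ) : Prop where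
  contOn : ContinuousOn φ (closure Ω)
  pos : ∀ ω ∈ Ω, 0 < φ ω
  bdryZero : ∀ ω ∈ closure Ω \ Ω, φ ω = 0
  le_one : ∀ ω ∈ closure Ω, φ ω ≤ 1
  max_one : ∃ ω ∈ closure Ω, φ ω = 1
  smoothExt : ContDiffOn ℝ 2 (fun x => φ (‖x‖⁻¹ • x)) (cone N Ω)
  eigen : ∀ x ∈ cone N Ω,
    lap N (fun y => φ (‖y‖⁻¹ • y)) x = -lam1 * ‖x‖ ^ (-(2:ℝ)) * φ (‖x‖⁻¹ • x)

/-- The Hardy constant `C_{H,Ω} = λ₁ + ((N-2)/2)²`. -/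
def CHconst (N : ℕ) (lam1 : ℝ) : ℝ := lam1 + (((N : ℝ) - 2) / 2) ^ 2

/-- The smaller root `γ_*` of `γ(γ + N - 2) = λ₁ - μ`. -/
def gammaStar (N : ℕ) (lam1 μ : ℝ) : ℝ :=
  (-((N : ℝ) - 2) - Real.sqrt (((N : ℝ) - 2) ^ 2 + 4 * (lam1 - μ))) / 2

/-- A positive (classical) solution of `(E) : -Δu - μ|x|⁻²u ≥ (|x|^{-α} * uᵖ) u^q` in `C_Ω^ρ`. -/
def IsPosSolE (N : ℕ) (ρ μ α p q : ℝ) (Ω : Set (Euc N)) (u : Euc N → ℝ) : Prop :=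
  ContDiffOn ℝ 2 u (coneGT N ρ Ω) ∧
  ContinuousOn u (closure (coneGT N ρ Ω)) ∧
  (∀ x ∈ coneGT N ρ Ω, 0 < u x) ∧
  (∀ x ∈ coneGT N ρ Ω, rieszConv N α ρ Ω (fun y => u y ^ p) x < ⊤) ∧
  (∀ x ∈ coneGT N ρ Ω,
    (rieszConv N α ρ Ω (fun y => u y ^ p) x).toReal * u x ^ q ≤
      -lap N u x - μ * ‖x‖ ^ (-(2:ℝ)) * u x)

/-- A positive solution of `(Z) : -Δu - μ|x|⁻²u ≥ (∫_{C_Ω^ρ} uᵖ) u^q` in `C_Ω^ρ`. -/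
def IsPosSolZ (N : ℕ) (ρ μ p q : ℝ) (Ω : Set (Euc N)) (u : Euc N → ℝ) : Prop :=
  ContDiffOn ℝ 2 u (coneGT N ρ Ω) ∧
  ContinuousOn u (closure (coneGT N ρ Ω)) ∧
  (∀ x ∈ coneGT N ρ Ω, 0 < u x) ∧
  (∫⁻ y in coneGT N ρ Ω, ENNReal.ofReal (u y ^ p)) < ⊤ ∧
  (∀ x ∈ coneGT N ρ Ω,
    (∫⁻ y in coneGT N ρ Ω, ENNReal.ofReal (u y ^ p)).toReal * u x ^ q ≤
      -lap N u x - μ * ‖x‖ ^ (-(2:ℝ)) * u x)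

/-- A positive solution `(u, v)` of the system `(S)` in `C_Ω^ρ`. -/
def IsPosSolS (N : ℕ) (ρ μ α p q s : ℝ) (Ω : Set (Euc N)) (u v : Euc N → ℝ) : Prop :=
  ContDiffOn ℝ 2 u (coneGT N ρ Ω) ∧ ContinuousOn u (closure (coneGT N ρ Ω)) ∧
  ContDiffOn ℝ 2 v (coneGT N ρ Ω) ∧ ContinuousOn v (closure (coneGT N ρ Ω)) ∧
  (∀ x ∈ coneGT N ρ Ω, 0 < u x) ∧ (∀ x ∈ coneGT N ρ Ω, 0 < v x) ∧
  (∀ x ∈ coneGT N ρ Ω, rieszConv N α ρ Ω (fun y => v y ^ p) x < ⊤) ∧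
  (∀ x ∈ coneGT N ρ Ω,
    (rieszConv N α ρ Ω (fun y => v y ^ p) x).toReal * v x ^ q ≤
      -lap N u x - μ * ‖x‖ ^ (-(2:ℝ)) * u x) ∧
  (∀ x ∈ coneGT N ρ Ω, u x ^ s ≤ -lap N v x - μ * ‖x‖ ^ (-(2:ℝ)) * v x)

/-!
The function `w = ψ² / u` is an admissible test function for the supersolution `u`. Testing
`V u ≤ -Δu` with `w` and integrating by parts gives `∫ V ψ² ≤ ∫ ⟪∇w, ∇u⟫`, and Picone's identity
`⟪∇(ψ² / u), ∇u⟫ = |∇ψ|² - |∇ψ - (ψ / u) ∇u|²` bounds the right-hand side by `∫ |∇ψ|²`.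
The Hardy inequality is the case `V = μ |x|⁻²`.
-/

section CompactSupport

variable {X : Type*} [TopologicalSpace X] [T2Space X] [MeasurableSpace X] [OpensMeasurableSpace X]
  {ν : Measure X} {f g : X → ℝ}

theorem integrable_mul_of_integrableOn_tsupport (hf : Continuous f) (hfc : HasCompactSupport f)
    (hg : IntegrableOn g (tsupport f) ν) : Integrable (fun x => f x * g x) ν := by
  have hsupp : Function.support (fun x => f x * g x) ⊆ tsupport f :=
    (Function.support_mul_subset_left f g).trans (subset_tsupport f)
  exact (integrableOn_iff_integrable_of_support_subset hsupp).1
    (hg.continuousOn_mul hf.continuousOn hfc)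

theorem integrable_mul_of_continuousOn_tsupport [IsFiniteMeasureOnCompacts ν] (hf : Continuous f)
    (hfc : HasCompactSupport f) (hg : ContinuousOn g (tsupport f)) :
    Integrable (fun x => f x * g x) ν :=
  integrable_mul_of_integrableOn_tsupport hf hfc (hg.integrableOn_compact hfc)

end CompactSupport

section DirectionalDerivative

variable {E : Type*} [NormedAddCommGroup E] [NormedSpace ℝ E] {u w g : E → ℝ} {x : E}

theorem contDiffAt_fderiv_apply (hu : ContDiffAt ℝ 2 u x) (v : E) :
    ContDiffAt ℝ 1 (fun y => fderiv ℝ u y v) x :=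
  (hu.fderiv_right (by norm_num)).clm_apply contDiffAt_const

variable [MeasurableSpace E] [BorelSpace E] {ν : Measure E}

theorem integrable_fderiv_apply_mul_of_continuousOn [IsFiniteMeasureOnCompacts ν]
    (hw : ContDiff ℝ 1 w) (hwc : HasCompactSupport w) (hg : ContinuousOn g (tsupport w)) (v : E) :
    Integrable (fun x => fderiv ℝ w x v * g x) ν :=
  integrable_mul_of_continuousOn_tsupport
    ((hw.continuous_fderiv one_ne_zero).clm_apply continuous_const) (hwc.fderiv_apply ℝ v)
    (hg.mono (tsupport_fderiv_apply_subset ℝ v))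

theorem integrable_mul_fderiv_apply [IsFiniteMeasureOnCompacts ν] (hw : Continuous w)
    (hwc : HasCompactSupport w) (hg : ∀ x ∈ tsupport w, ContDiffAt ℝ 1 g x) (v : E) :
    Integrable (fun x => w x * fderiv ℝ g x v) ν :=
  integrable_mul_of_continuousOn_tsupport hw hwc fun x hx =>
    (((hg x hx).continuousAt_fderiv one_ne_zero).clm_apply continuousAt_const).continuousWithinAt

theorem integral_mul_fderiv_eq_neg_of_hasCompactSupport [FiniteDimensional ℝ E] [ν.IsAddHaarMeasure]
    (hw : ContDiff ℝ 1 w) (hwc : HasCompactSupport w)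
    (hg : ∀ x ∈ tsupport w, ContDiffAt ℝ 1 g x) (v : E) :
    ∫ x, w x * fderiv ℝ g x v ∂ν = -∫ x, fderiv ℝ w x v * g x ∂ν := by
  have hgc : ContinuousOn g (tsupport w) := fun x hx => (hg x hx).continuousAt.continuousWithinAt
  exact integral_mul_fderiv_eq_neg_fderiv_mul_of_integrable
    (integrable_fderiv_apply_mul_of_continuousOn hw hwc hgc v)
    (integrable_mul_fderiv_apply hw.continuous hwc hg v)
    (integrable_mul_of_continuousOn_tsupport hw.continuous hwc hgc)
    (fun x _ => hw.differentiable one_ne_zero x)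
    (fun x hx => (hg x hx).differentiableAt one_ne_zero)

end DirectionalDerivative

open scoped Gradient Laplacian RealInnerProductSpace

section Picone

variable {E : Type*} [NormedAddCommGroup E] [InnerProductSpace ℝ E] [CompleteSpace E]
  {u ψ : E → ℝ} {x : E}

theorem gradient_sq_div (hψ : DifferentiableAt ℝ ψ x) (hu : DifferentiableAt ℝ u x)
    (hx : u x ≠ 0) :
    ∇ (fun y => ψ y ^ 2 / u y) x = (2 * (ψ x / u x)) • ∇ ψ x - (ψ x / u x) ^ 2 • ∇ u x := by
  refine ext_inner_right ℝ fun v => ?_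
  have hinv : HasFDerivAt (fun y => (u y)⁻¹) (-(u x ^ 2)⁻¹ • fderiv ℝ u x) x :=
    (hasDerivAt_inv hx).comp_hasFDerivAt x hu.hasFDerivAt
  have hsq : HasFDerivAt (fun y => ψ y ^ 2) ((2 * ψ x) • fderiv ℝ ψ x) x := by
    simpa using hψ.hasFDerivAt.pow 2
  simp_rw [div_eq_mul_inv (ψ _ ^ 2), inner_gradient_left, (hsq.fun_mul hinv).fderiv,
    inner_sub_left, real_inner_smul_left, inner_gradient_left]
  simp only [neg_smul, smul_neg, add_apply, neg_apply, smul_apply, smul_eq_mul]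
  field_simp
  ring

theorem inner_gradient_sq_div_gradient (hψ : DifferentiableAt ℝ ψ x) (hu : DifferentiableAt ℝ u x)
    (hx : u x ≠ 0) :
    ⟪∇ (fun y => ψ y ^ 2 / u y) x, ∇ u x⟫ =
      ‖∇ ψ x‖ ^ 2 - ‖∇ ψ x - (ψ x / u x) • ∇ u x‖ ^ 2 := by
  rw [gradient_sq_div hψ hu hx, norm_sub_sq_real, norm_smul, mul_pow, norm_eq_abs, sq_abs,
    inner_sub_left, real_inner_smul_left, real_inner_smul_left, real_inner_smul_right,
    real_inner_self_eq_norm_sq]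
  ring

theorem inner_gradient_sq_div_gradient_le (hψ : DifferentiableAt ℝ ψ x)
    (hu : DifferentiableAt ℝ u x) (hx : u x ≠ 0) :
    ⟪∇ (fun y => ψ y ^ 2 / u y) x, ∇ u x⟫ ≤ ‖∇ ψ x‖ ^ 2 := by
  rw [inner_gradient_sq_div_gradient hψ hu hx]
  exact sub_le_self _ (sq_nonneg _)

end Picone

section GreenIdentity

variable {E : Type*} [NormedAddCommGroup E] [InnerProductSpace ℝ E] [FiniteDimensional ℝ E]
  {u w : E → ℝ} {x : E}

theorem laplacian_eq_sum_fderiv_fderiv {ι : Type*} [Fintype ι] (b : OrthonormalBasis ι ℝ E)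
    (hu : ContDiffAt ℝ 2 u x) :
    Δ u x = ∑ i, fderiv ℝ (fun y => fderiv ℝ u y (b i)) x (b i) := by
  have hdiff : DifferentiableAt ℝ (fderiv ℝ u) x :=
    (hu.fderiv_right (m := 1) (by norm_num)).differentiableAt one_ne_zero
  simp [InnerProductSpace.laplacian_eq_iteratedFDeriv_orthonormalBasis u b,
    iteratedFDeriv_two_apply, fderiv_clm_apply hdiff (differentiableAt_const _)]

theorem continuousAt_laplacian (hu : ContDiffAt ℝ 2 u x) : ContinuousAt (Δ u) x := by
  rw [InnerProductSpace.laplacian_eq_iteratedFDeriv_stdOrthonormalBasis]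
  have hcont := hu.continuousAt_iteratedFDeriv (k := 2) le_rfl
  exact tendsto_finsetSum _ fun i _ => (continuous_eval_const _).continuousAt.comp hcont

theorem inner_gradient_gradient_eq_sum {ι : Type*} [Fintype ι] (b : OrthonormalBasis ι ℝ E) :
    ⟪∇ w x, ∇ u x⟫ = ∑ i, fderiv ℝ w x (b i) * fderiv ℝ u x (b i) := by
  simp_rw [← b.sum_inner_mul_inner (∇ w x) (∇ u x), inner_gradient_left,
    inner_gradient_right, conj_trivial]

variable [MeasurableSpace E] [BorelSpace E] {ν : Measure E}

theorem integrable_inner_gradient [IsFiniteMeasureOnCompacts ν] (hw : ContDiff ℝ 1 w)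
    (hwc : HasCompactSupport w) (hu : ∀ x ∈ tsupport w, ContDiffAt ℝ 1 u x) :
    Integrable (fun x => ⟪∇ w x, ∇ u x⟫) ν := by
  simp_rw [inner_gradient_gradient_eq_sum (stdOrthonormalBasis ℝ E)]
  refine integrable_finsetSum _ fun i _ =>
    integrable_fderiv_apply_mul_of_continuousOn hw hwc (fun x hx => ?_) _
  exact (((hu x hx).continuousAt_fderiv one_ne_zero).clm_apply
    continuousAt_const).continuousWithinAt

theorem integral_mul_laplacian_eq_neg_integral_inner_gradient [ν.IsAddHaarMeasure]
    (hw : ContDiff ℝ 1 w) (hwc : HasCompactSupport w)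
    (hu : ∀ x ∈ tsupport w, ContDiffAt ℝ 2 u x) :
    ∫ x, w x * Δ u x ∂ν = -∫ x, ⟪∇ w x, ∇ u x⟫ ∂ν := by
  set b := stdOrthonormalBasis ℝ E
  have hdu (i) : ∀ x ∈ tsupport w, ContDiffAt ℝ 1 (fun y => fderiv ℝ u y (b i)) x :=
    fun x hx => contDiffAt_fderiv_apply (hu x hx) (b i)
  have hpoint (x : E) :
      w x * Δ u x = ∑ i, w x * fderiv ℝ (fun y => fderiv ℝ u y (b i)) x (b i) := by
    by_cases hx : x ∈ tsupport w
    · rw [laplacian_eq_sum_fderiv_fderiv b (hu x hx), Finset.mul_sum]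
    · simp [image_eq_zero_of_notMem_tsupport hx]
  simp_rw [hpoint, inner_gradient_gradient_eq_sum b]
  rw [integral_finsetSum _ fun i _ => integrable_mul_fderiv_apply hw.continuous hwc (hdu i) _,
    integral_finsetSum _ fun i _ => integrable_fderiv_apply_mul_of_continuousOn hw hwc
      (fun x hx => (hdu i x hx).continuousAt.continuousWithinAt) _, ← Finset.sum_neg_distrib]
  exact Finset.sum_congr rfl fun i _ =>
    integral_mul_fderiv_eq_neg_of_hasCompactSupport hw hwc (hdu i) (b i)

end GreenIdentity

section TestFunction

theorem tsupport_sq_div_subset {X : Type*} [TopologicalSpace X] {u ψ : X → ℝ} :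
    tsupport (fun x => ψ x ^ 2 / u x) ⊆ tsupport ψ :=
  closure_mono fun x hx hψx => hx (by simp [hψx])

theorem contDiff_sq_div {E : Type*} [NormedAddCommGroup E] [NormedSpace ℝ E] {u ψ : E → ℝ}
    {n : WithTop ℕ∞} (hψ : ContDiff ℝ n ψ) (hu : ∀ x ∈ tsupport ψ, ContDiffAt ℝ n u x)
    (hne : ∀ x ∈ tsupport ψ, u x ≠ 0) : ContDiff ℝ n (fun x => ψ x ^ 2 / u x) :=
  contMDiff_iff_contDiff.1 <| contMDiff_of_tsupport fun x hx =>
    have hxψ := tsupport_sq_div_subset hx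
    ((hψ.contDiffAt.pow 2).div (hu x hxψ) (hne x hxψ)).contMDiffAt

end TestFunction

section Supersolution

variable {E : Type*} [NormedAddCommGroup E] [InnerProductSpace ℝ E] [FiniteDimensional ℝ E]
  [MeasurableSpace E] [BorelSpace E] {U : Set E} {u ψ : E → ℝ}

theorem integral_inner_gradient_sq_div_le {ν : Measure E} [IsFiniteMeasureOnCompacts ν]
    (hu : ∀ x ∈ tsupport ψ, ContDiffAt ℝ 1 u x) (hne : ∀ x ∈ tsupport ψ, u x ≠ 0)
    (hψ : ContDiff ℝ 1 ψ) (hψc : HasCompactSupport ψ) :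
    ∫ x, ⟪∇ (fun y => ψ y ^ 2 / u y) x, ∇ u x⟫ ∂ν ≤ ∫ x, ‖∇ ψ x‖ ^ 2 ∂ν := by
  have hwψ : tsupport (fun x => ψ x ^ 2 / u x) ⊆ tsupport ψ := tsupport_sq_div_subset
  refine integral_mono
    (integrable_inner_gradient (contDiff_sq_div hψ hu hne)
      (hψc.of_isClosed_subset (isClosed_tsupport _) hwψ) fun x hx => hu x (hwψ hx))
    (by simpa only [real_inner_self_eq_norm_sq] using
      integrable_inner_gradient hψ hψc fun x _ => hψ.contDiffAt)
    fun x => ?_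
  by_cases hx : x ∈ tsupport ψ
  · exact inner_gradient_sq_div_gradient_le (hψ.differentiable one_ne_zero x)
      ((hu x hx).differentiableAt one_ne_zero) (hne x hx)
  · have hzero : ∇ (fun y => ψ y ^ 2 / u y) x = 0 := by
      rw [(notMem_tsupport_iff_eventuallyEq.1 fun h => hx (hwψ h)).gradient_eq]
      exact gradient_const x 0
    simp only [hzero, inner_zero_left]
    positivity

theorem integral_sq_mul_le_integral_norm_gradient_sq_of_supersolution {ν : Measure E}
    [ν.IsAddHaarMeasure] {V : E → ℝ} (hU : IsOpen U) (hV : LocallyIntegrableOn V U ν)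
    (hu : ContDiffOn ℝ 2 u U) (hpos : ∀ x ∈ U, 0 < u x)
    (hsuper : ∀ x ∈ U, 0 ≤ -Δ u x - V x * u x)
    (hψ : ContDiff ℝ 1 ψ) (hψc : HasCompactSupport ψ) (hψU : tsupport ψ ⊆ U) :
    ∫ x, ψ x ^ 2 * V x ∂ν ≤ ∫ x, ‖∇ ψ x‖ ^ 2 ∂ν := by
  set w : E → ℝ := fun x => ψ x ^ 2 / u x
  have hwψ : tsupport w ⊆ tsupport ψ := tsupport_sq_div_subset
  have hwc : HasCompactSupport w := hψc.of_isClosed_subset (isClosed_tsupport _) hwψ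
  have hu2 : ∀ x ∈ tsupport ψ, ContDiffAt ℝ 2 u x := fun x hx =>
    hu.contDiffAt (hU.mem_nhds (hψU hx))
  have hu1 : ∀ x ∈ tsupport ψ, ContDiffAt ℝ 1 u x := fun x hx => (hu2 x hx).of_le one_le_two
  have hne : ∀ x ∈ tsupport ψ, u x ≠ 0 := fun x hx => (hpos x (hψU hx)).ne'
  have hw : ContDiff ℝ 1 w := contDiff_sq_div hψ hu1 hne
  have hVint : Integrable (fun x => ψ x ^ 2 * V x) ν := by
    simp_rw [sq, mul_assoc]
    refine integrable_mul_of_integrableOn_tsupport hψ.continuous hψc ?_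
    exact (hV.integrableOn_compact_subset hψU hψc).continuousOn_mul hψ.continuous.continuousOn hψc
  have hΔint : Integrable (fun x => w x * -Δ u x) ν :=
    integrable_mul_of_continuousOn_tsupport hw.continuous hwc fun x hx =>
      (continuousAt_laplacian (hu2 x (hwψ hx))).neg.continuousWithinAt
  have htest (x : E) : ψ x ^ 2 * V x ≤ w x * -Δ u x := by
    by_cases hx : x ∈ tsupport ψ
    · calc ψ x ^ 2 * V x = w x * (V x * u x) := by
            have := hne x hx
            simp only [w]
            field_simp
        _ ≤ w x * -Δ u x :=
            mul_le_mul_of_nonneg_left (sub_nonneg.1 (hsuper x (hψU hx)))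
              (div_nonneg (sq_nonneg _) (hpos x (hψU hx)).le)
    · simp [w, image_eq_zero_of_notMem_tsupport hx]
  calc ∫ x, ψ x ^ 2 * V x ∂ν
      ≤ ∫ x, w x * -Δ u x ∂ν := integral_mono hVint hΔint htest
    _ = ∫ x, ⟪∇ w x, ∇ u x⟫ ∂ν := by
        simp_rw [mul_neg]
        rw [integral_neg, integral_mul_laplacian_eq_neg_integral_inner_gradient hw hwc
          fun x hx => hu2 x (hwψ hx), neg_neg]
    _ ≤ ∫ x, ‖∇ ψ x‖ ^ 2 ∂ν := integral_inner_gradient_sq_div_le hu1 hne hψ hψc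

theorem hardy_inequality_of_positive_supersolution_general (hU : IsOpen U) (hU0 : (0 : E) ∉ U)
    {μ : ℝ} (hu : ContDiffOn ℝ 2 u U) (hpos : ∀ x ∈ U, 0 < u x)
    (hsuper : ∀ x ∈ U, 0 ≤ -Δ u x - μ / ‖x‖ ^ 2 * u x)
    (hψ : ContDiff ℝ 1 ψ) (hψc : HasCompactSupport ψ) (hψU : tsupport ψ ⊆ U) :
    μ * ∫ x, ψ x ^ 2 / ‖x‖ ^ 2 ≤ ∫ x, ‖∇ ψ x‖ ^ 2 := by
  have hV : ContinuousOn (fun x : E => μ / ‖x‖ ^ 2) U :=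
    continuousOn_const.div (by fun_prop) fun x hx =>
      pow_ne_zero 2 (norm_ne_zero_iff.2 (ne_of_mem_of_not_mem hx hU0))
  calc μ * ∫ x, ψ x ^ 2 / ‖x‖ ^ 2 = ∫ x, ψ x ^ 2 * (μ / ‖x‖ ^ 2) := by
        rw [← integral_const_mul]
        congr with x
        ring
    _ ≤ ∫ x, ‖∇ ψ x‖ ^ 2 :=
        integral_sq_mul_le_integral_norm_gradient_sq_of_supersolution hU
          (hV.locallyIntegrableOn hU.measurableSet) hu hpos hsuper hψ hψc hψU

end Supersolution

section Cone

variable {N : ℕ} {Ω : Set (Euc N)} (ρ : ℝ)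

theorem lap_eq_laplacian (u : Euc N → ℝ) (x : Euc N) : lap N u x = Δ u x := by
  simp [lap, InnerProductSpace.laplacian_eq_iteratedFDeriv_orthonormalBasis u
    (EuclideanSpace.basisFun (Fin N) ℝ)]

theorem zero_notMem_coneGT (hΩ : Ω ⊆ Metric.sphere 0 1) : (0 : Euc N) ∉ coneGT N ρ Ω :=
  fun h => by simpa using hΩ h.2

theorem isOpen_coneGT (hΩ : Ω ⊆ Metric.sphere 0 1)
    (hopen : IsOpen {ω : Metric.sphere (0 : Euc N) 1 | (ω : Euc N) ∈ Ω}) :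
    IsOpen (coneGT N ρ Ω) := by
  obtain ⟨V, hV, hVΩ⟩ := isOpen_induced_iff.1 hopen
  have hnormalize : ContinuousOn (fun x : Euc N => ‖x‖⁻¹ • x) {0}ᶜ := fun x hx =>
    ((continuousAt_id.norm.inv₀ (norm_ne_zero_iff.2 hx)).smul continuousAt_id).continuousWithinAt
  have hcone : coneGT N ρ Ω = {x | ρ < ‖x‖} ∩ ({0}ᶜ ∩ (fun x => ‖x‖⁻¹ • x) ⁻¹' V) := by
    ext x
    refine and_congr_right fun _ => ?_
    rcases eq_or_ne x 0 with rfl | hx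
    · simpa using fun h => by simpa using hΩ h
    · have hsphere : ‖x‖⁻¹ • x ∈ Metric.sphere (0 : Euc N) 1 := by simp [norm_smul, hx]
      simpa [hx] using (Set.ext_iff.1 hVΩ ⟨_, hsphere⟩).symm
  rw [hcone]
  exact (isOpen_lt continuous_const continuous_norm).inter
    (hnormalize.isOpen_inter_preimage isOpen_compl_singleton hV)

end Cone

/-- Agmon–Allegretto–Piepenbrink-type positivity estimate: a positive
supersolution of `-Δ - μ|x|⁻²` on `C_Ω^ρ` yields the Hardy-type inequality for every smooth
compactly supported test function in the cone. -/
theorem hardy_inequality_of_positive_supersolution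
    (N : ℕ) (hN : 2 ≤ N) (Ω : Set (Euc N)) (hΩ : IsConeDomain N Ω)
    (ρ μ : ℝ) (hρ : 0 < ρ) (u : Euc N → ℝ)
    (hu2 : ContDiffOn ℝ 2 u (coneGT N ρ Ω))
    (hupos : ∀ x ∈ coneGT N ρ Ω, 0 < u x)
    (hineq : ∀ x ∈ coneGT N ρ Ω, 0 ≤ -lap N u x - μ * ‖x‖ ^ (-(2:ℝ)) * u x) :
    ∀ ψ : Euc N → ℝ, ContDiff ℝ (⊤ : ℕ∞) ψ → HasCompactSupport ψ →
      tsupport ψ ⊆ coneGT N ρ Ω →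
      μ * ∫ x, ψ x ^ 2 / ‖x‖ ^ 2 ≤ ∫ x, ‖gradient ψ x‖ ^ 2 := by
  intro ψ hψ hψc hψU
  exact hardy_inequality_of_positive_supersolution_general (isOpen_coneGT ρ hΩ.1 hΩ.2.2)
    (zero_notMem_coneGT ρ hΩ.1) hu2 hupos
    (by simpa [lap_eq_laplacian, rpow_neg, div_eq_mul_inv] using hineq)
    (hψ.of_le (mod_cast le_top)) hψc hψU
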